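/- Let n ≥ 2 be an integer and s ∈ ℂ. The function g(z) := √(1−z) · ₂F₁(n/2 + s, n/2 − s, n/2 + 1; 1 − z) satisfies the radial hypergeometric equation E(n, s²) on the interval (0, 1). -/

import Mathlib

open Real Set Complex

/-- A complex-valued function `w` of a real variable satisfies the radial hypergeometric
equation `E(n, τ)` on the set `I`:
`z(1−z)w'' + (n/2 − nz)w' − (((n−1)/4)(n−1+1/(1−z)) − τ)w = 0` on `I`. -/
def SatisfiesRadialHGC (n : ℕ) (τ : ℂ) (w : ℝ → ℂ) (I : Set ℝ) : Prop :=
  ∀ z ∈ I, (z : ℂ) * (1 - z) * deriv (deriv w) z + ((n : ℂ) / 2 - n * z) * deriv w z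
    - (((n : ℂ) - 1) / 4 * ((n : ℂ) - 1 + 1 / (1 - (z : ℂ))) - τ) * w z = 0

/-!
The coefficients of `₂F₁ a b c` satisfy `(m + 1) (c + m) uₘ₊₁ = (a + m) (b + m) uₘ`, which is
the hypergeometric equation compared coefficient by coefficient. With `x = 1 - z` and `f` analytic
at `x`, differentiating `√(1 - z) f(1 - z)` in `z` amounts to replacing `f` by
`-(f' + f / (2x))`; doing so twice shows that the radial operator turns `√(1 - z) f(1 - z)` into
`√(1 - z)` times the hypergeometric operator of `f` at `x`, with `a, b = n/2 ± s` and `c = n/2 + 1`.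
-/

section PowerSeries

open FormalMultilinearSeries

theorem hasSum_mul_pow_of_hasSum_succ {R : Type*} [CommRing R] [TopologicalSpace R]
    [IsTopologicalRing R] {v : ℕ → R} {x S : R}
    (h : HasSum (fun n ↦ v (n + 1) * x ^ n) S) (hv : v 0 = 0) :
    HasSum (fun n ↦ v n * x ^ n) (x * S) := by
  rw [← hasSum_nat_add_iff' 1]
  simpa [hv, pow_succ', mul_left_comm] using h.mul_left x

variable {𝕜 : Type*} [NontriviallyNormedField 𝕜] {f : 𝕜 → 𝕜} {u : ℕ → 𝕜} {x x₀ : 𝕜}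
  {r : ENNReal}

theorem hasSum_of_hasFPowerSeriesOnBall_ofScalars
    (h : HasFPowerSeriesOnBall f (ofScalars 𝕜 u) 0 r) (hx : x ∈ Metric.eball 0 r) :
    HasSum (fun n ↦ u n * x ^ n) (f x) := by
  simpa [ofScalars_apply_eq, mul_comm] using h.hasSum hx

theorem hasFPowerSeriesOnBall_deriv_ofScalars [CompleteSpace 𝕜]
    (h : HasFPowerSeriesOnBall f (ofScalars 𝕜 u) x₀ r) :
    HasFPowerSeriesOnBall (deriv f) (ofScalars 𝕜 fun n ↦ ((n + 1 : ℕ) : 𝕜) * u (n + 1)) x₀ r := by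
  convert! (ContinuousLinearMap.apply 𝕜 𝕜 (1 : 𝕜)).comp_hasFPowerSeriesOnBall h.fderiv
  ext n
  simp

theorem hasSum_mul_deriv_of_hasFPowerSeriesOnBall_ofScalars [CompleteSpace 𝕜]
    (h : HasFPowerSeriesOnBall f (ofScalars 𝕜 u) 0 r) (hx : x ∈ Metric.eball 0 r) :
    HasSum (fun n : ℕ ↦ (n : 𝕜) * u n * x ^ n) (x * deriv f x) :=
  hasSum_mul_pow_of_hasSum_succ (v := fun n : ℕ ↦ (n : 𝕜) * u n)
    (hasSum_of_hasFPowerSeriesOnBall_ofScalars (hasFPowerSeriesOnBall_deriv_ofScalars h) hx)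
    (by simp)

end PowerSeries

section Hypergeometric

theorem ordinaryHypergeometricCoefficient_succ {𝕂 : Type*} [Field 𝕂] [CharZero 𝕂] (a b : 𝕂) {c : 𝕂}
    {n : ℕ} (hc : c + n ≠ 0) :
    ((n : 𝕂) + 1) * (c + n) * ordinaryHypergeometricCoefficient a b c (n + 1) =
      (a + n) * (b + n) * ordinaryHypergeometricCoefficient a b c n := by
  have hn : (n : 𝕂) + 1 ≠ 0 := n.cast_add_one_ne_zero
  simp only [ordinaryHypergeometricCoefficient, ascPochhammer_succ_eval, Nat.factorial_succ,
    Nat.cast_mul, Nat.cast_succ, mul_inv]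
  field_simp

variable {𝕂 : Type*} [RCLike 𝕂] (a b c : 𝕂)

theorem one_le_ordinaryHypergeometricSeries_radius (𝔸 : Type*) [NormedDivisionRing 𝔸]
    [NormedAlgebra 𝕂 𝔸] : 1 ≤ (ordinaryHypergeometricSeries 𝔸 a b c).radius := by
  by_cases! habc : ∀ k : ℕ, (k : 𝕂) ≠ -a ∧ (k : 𝕂) ≠ -b ∧ (k : 𝕂) ≠ -c
  · exact (ordinaryHypergeometricSeries_radius_eq_one 𝔸 a b c habc).ge
  · obtain ⟨k, hk⟩ := habc
    have hzero : k = -a ∨ k = -b ∨ k = -c := by tauto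
    refine le_top.trans_eq (Eq.symm ?_)
    exact FormalMultilinearSeries.radius_eq_top_of_forall_image_add_eq_zero _ (k + 1) fun n ↦
      ordinaryHypergeometricSeries_eq_zero_of_neg_nat a b c hzero (by lia)

theorem hasFPowerSeriesOnBall_ordinaryHypergeometric (𝔸 : Type*) [NormedDivisionRing 𝔸]
    [NormedAlgebra 𝕂 𝔸] [CompleteSpace 𝔸] :
    HasFPowerSeriesOnBall (₂F₁ a b c : 𝔸 → 𝔸) (ordinaryHypergeometricSeries 𝔸 a b c) 0 1 :=
  have hr := one_le_ordinaryHypergeometricSeries_radius a b c 𝔸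
  ((ordinaryHypergeometricSeries 𝔸 a b c).hasFPowerSeriesOnBall (one_pos.trans_le hr)).mono
    one_pos hr

/-- The hypergeometric differential operator with parameters `a`, `b`, `c`. -/
noncomputable def hypergeometricOperator {𝕜 : Type*} [NontriviallyNormedField 𝕜] (a b c : 𝕜)
    (f : 𝕜 → 𝕜) (x : 𝕜) : 𝕜 :=
  x * (1 - x) * deriv (deriv f) x + (c - (a + b + 1) * x) * deriv f x - a * b * f x

theorem hypergeometricOperator_ordinaryHypergeometric (hc : ∀ k : ℕ, c + k ≠ 0) {x : 𝕂}
    (hx : x ∈ Metric.eball 0 1) : hypergeometricOperator a b c (₂F₁ a b c) x = 0 := by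
  set u := ordinaryHypergeometricCoefficient a b c
  set F : 𝕂 → 𝕂 := ₂F₁ a b c
  have hF : HasFPowerSeriesOnBall F (.ofScalars 𝕂 u) 0 1 :=
    hasFPowerSeriesOnBall_ordinaryHypergeometric a b c 𝕂
  have hF' := hasFPowerSeriesOnBall_deriv_ofScalars hF
  have sum_F := hasSum_of_hasFPowerSeriesOnBall_ofScalars hF hx
  have sum_F' := hasSum_of_hasFPowerSeriesOnBall_ofScalars hF' hx
  have sum_xF' := hasSum_mul_deriv_of_hasFPowerSeriesOnBall_ofScalars hF hx
  have sum_xF'' := hasSum_mul_deriv_of_hasFPowerSeriesOnBall_ofScalars hF' hx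
  have sum_xxF'' : HasSum (fun n : ℕ ↦ (n : 𝕂) * (n - 1) * u n * x ^ n)
      (x * (x * deriv (deriv F) x)) :=
    hasSum_mul_pow_of_hasSum_succ (v := fun n : ℕ ↦ (n : 𝕂) * (n - 1) * u n)
      (by convert! sum_xF'' using 3; push_cast; ring) (by simp)
  suffices HasSum (fun _ : ℕ ↦ (0 : 𝕂)) (hypergeometricOperator a b c F x) from
    this.unique hasSum_zero
  convert! (((sum_xF''.sub sum_xxF'').add (sum_F'.mul_left c)).sub
    (sum_xF'.mul_left (a + b + 1))).sub (sum_F.mul_left (a * b)) using 1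
  · ext n
    push_cast
    linear_combination -x ^ n * ordinaryHypergeometricCoefficient_succ a b (hc n)
  · rw [hypergeometricOperator]
    ring

end Hypergeometric

section Radial

/-- The left-hand side of the radial hypergeometric equation `E(ν, τ)`, with the dimension
replaced by a complex parameter `ν`. -/
noncomputable def radialOperator (ν τ : ℂ) (w : ℝ → ℂ) (z : ℝ) : ℂ :=
  (z : ℂ) * (1 - z) * deriv (deriv w) z + (ν / 2 - ν * z) * deriv w z
    - ((ν - 1) / 4 * (ν - 1 + 1 / (1 - (z : ℂ))) - τ) * w z

variable {f : ℂ → ℂ} {z : ℝ}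

theorem hasDerivAt_sqrt_one_sub_mul_comp (hz : z < 1) (hf : DifferentiableAt ℂ f (1 - z)) :
    HasDerivAt (fun t : ℝ ↦ (√(1 - t) : ℂ) * f (1 - t))
      (√(1 - z) * -(deriv f (1 - z) + f (1 - z) / (2 * (1 - z)))) z := by
  have hsqrt : HasDerivAt (fun t : ℝ ↦ (√(1 - t) : ℂ)) ((-1 / (2 * √(1 - z)) : ℝ) : ℂ) z :=
    (((hasDerivAt_id z).const_sub 1).sqrt (sub_pos.2 hz).ne').ofReal_comp
  have hcomp : HasDerivAt (fun t : ℝ ↦ f (1 - t)) (-deriv f (1 - z)) z :=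
    (hf.hasDerivAt.comp_const_sub 1 (z : ℂ)).comp_ofReal
  have hne : (√(1 - z) : ℂ) ≠ 0 := mod_cast (Real.sqrt_pos.2 (sub_pos.2 hz)).ne'
  have hsq : (1 - z : ℂ) = (√(1 - z) : ℂ) ^ 2 :=
    mod_cast (Real.sq_sqrt (sub_pos.2 hz).le).symm
  convert! hsqrt.mul hcomp using 1
  push_cast
  generalize deriv f (1 - z) = f', f (1 - z) = f₀
  rw [hsq]
  field_simp
  ring

theorem deriv_sqrt_one_sub_mul_comp_eventuallyEq (hz : z < 1) (hf : AnalyticAt ℂ f (1 - z)) :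
    deriv (fun t : ℝ ↦ (√(1 - t) : ℂ) * f (1 - t)) =ᶠ[nhds z]
      fun t : ℝ ↦ (√(1 - t) : ℂ) * -(deriv f (1 - t) + f (1 - t) / (2 * (1 - t))) := by
  have hcont : ContinuousAt (fun t : ℝ ↦ (1 - t : ℂ)) z := by fun_prop
  filter_upwards [hcont.eventually hf.eventually_analyticAt, Iio_mem_nhds hz] with t hft ht
  exact (hasDerivAt_sqrt_one_sub_mul_comp ht hft.differentiableAt).deriv

theorem deriv_deriv_sqrt_one_sub_mul_comp (hz : z < 1) (hf : AnalyticAt ℂ f (1 - z)) :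
    deriv (deriv fun t : ℝ ↦ (√(1 - t) : ℂ) * f (1 - t)) z = √(1 - z) *
      (deriv (deriv f) (1 - z) + deriv f (1 - z) / (1 - z) - f (1 - z) / (4 * (1 - z) ^ 2)) := by
  have hne : (1 - z : ℂ) ≠ 0 := mod_cast (sub_pos.2 hz).ne'
  have hD : HasDerivAt (fun x ↦ -(deriv f x + f x / (2 * x)))
      (-(deriv (deriv f) (1 - z) + (deriv f (1 - z) * (2 * (1 - z)) - f (1 - z) * (2 * 1)) /
        (2 * (1 - z)) ^ 2)) (1 - z : ℂ) :=
    (hf.deriv.differentiableAt.hasDerivAt.add (hf.differentiableAt.hasDerivAt.fun_div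
      ((hasDerivAt_id _).const_mul 2) (mul_ne_zero two_ne_zero hne))).neg
  rw [(deriv_sqrt_one_sub_mul_comp_eventuallyEq hz hf).deriv_eq,
    (hasDerivAt_sqrt_one_sub_mul_comp hz hD.differentiableAt).deriv, hD.deriv]
  field_simp
  ring

theorem radialOperator_sqrt_one_sub_mul_comp (ν s : ℂ) (hz : z < 1) (hf : AnalyticAt ℂ f (1 - z)) :
    radialOperator ν (s ^ 2) (fun t ↦ √(1 - t) * f (1 - t)) z =
      √(1 - z) * hypergeometricOperator (ν / 2 + s) (ν / 2 - s) (ν / 2 + 1) f (1 - z) := by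
  have hne : (1 - z : ℂ) ≠ 0 := mod_cast (sub_pos.2 hz).ne'
  rw [radialOperator, hypergeometricOperator, deriv_deriv_sqrt_one_sub_mul_comp hz hf,
    (hasDerivAt_sqrt_one_sub_mul_comp hz hf.differentiableAt).deriv]
  field_simp
  ring

theorem green_solution_positive_curvature_general (ν s : ℂ) (hν : ∀ k : ℕ, ν / 2 + 1 + k ≠ 0)
    (hz : z ∈ Ioo 0 1) :
    radialOperator ν (s ^ 2)
      (fun t ↦ √(1 - t) * ₂F₁ (ν / 2 + s) (ν / 2 - s) (ν / 2 + 1) (1 - t : ℂ)) z = 0 := by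
  have hx : (1 - z : ℂ) ∈ Metric.eball 0 1 := by
    rw [← ENNReal.ofReal_one, Metric.eball_ofReal, mem_ball_zero_iff, ← ofReal_one, ← ofReal_sub,
      norm_real, Real.norm_of_nonneg (sub_pos.2 hz.2).le]
    exact sub_lt_self 1 hz.1
  rw [radialOperator_sqrt_one_sub_mul_comp ν s hz.2
      ((hasFPowerSeriesOnBall_ordinaryHypergeometric _ _ _ ℂ).analyticAt_of_mem hx),
    hypergeometricOperator_ordinaryHypergeometric _ _ _ hν hx, mul_zero]

end Radial

theorem green_solution_positive_curvature (n : ℕ) (hn : 2 ≤ n) (s : ℂ)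
    (g : ℝ → ℂ)
    (hg : ∀ z : ℝ, g z = (Real.sqrt (1 - z) : ℂ) *
      ₂F₁ ((n : ℂ) / 2 + s) ((n : ℂ) / 2 - s) ((n : ℂ) / 2 + 1) (((1 - z : ℝ)) : ℂ)) :
    SatisfiesRadialHGC n (s ^ 2) g (Ioo 0 1) := by
  intro z hz
  have hc (k : ℕ) : (n : ℂ) / 2 + 1 + k ≠ 0 := by
    simpa using ofReal_ne_zero.2 (by positivity : (n : ℝ) / 2 + 1 + k ≠ 0)
  rw [show g = _ from funext hg]
  simpa [radialOperator] using green_solution_positive_curvature_general n s hc hz
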